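/- arXiv:1809.02315 — 4 statements merged into one kernel-verified Lean document; each statement's English description precedes it below -/
import Mathlib

section
/- Let (U,V) and (V,U) be cotorsion pairs in T, set C := U ∩ V and K := U + V, the subcategory of objects isomorphic to X ⊕ Y with X in U and Y in V. Assume both quotient categories T/U and T/V are abelian and that K contains a nonzero object having no nonzero direct summand in C. Then for every indecomposable object K of K not lying in C, both K[-1] and K[1] are indecomposable objects of K not lying in C. -/
/-!
The hypotheses make `(U, V)` and `(V, U)` orthogonal: `Hom(U, V[1]) = 0 = Hom(V, U[1])`, and `U` and
`V` determine each other by these conditions. The indecomposable object `K` lies in `U` or in `V`, and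
by symmetry one may take `K ∈ U`, `K ∉ V`. Everything follows from

  `Hom(V, K) = 0 = Hom(K, V)`                                   (`hom_to_eq_zero`, `hom_from_eq_zero`)

since `Hom(V, K[-1][1]) = Hom(V, K) = 0` gives `K[-1] ∈ U`, and `Hom(K[1], V[1]) = Hom(K, V) = 0` gives
`K[1] ∈ U`; neither shift can lie in `V`, as an identity map would then be a morphism `U ⟶ V[1]` or
`V ⟶ U[1]`.

For `Hom(V, K) = 0`, take a triangle `K' ⟶ W ⟶ K ⟶ K'[1]` with `K' ∈ U` and `W ∈ V`; then `W ∈ U` as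
well, since `U` is closed under extensions. Write `h : K ⟶ K'[1]`, `c : K'[1] ⟶ W[1]`, `r : W[1] ⟶ K[1]`
for the maps of the rotated triangle. Nothing from `V` maps nontrivially to `K'[1]`, `W[1]` or `K[1]`,
so equalities in `T/V` between maps into these objects hold in `T`. Let `π : K'[1] ⟶ Q` be the cokernel
of `h` in `T/V`. Then `c = π d`, and `π d r = c r = 0` forces `d r = 0`, so `d = d' c`. Hence
`(1 - π d') c = 0` and `1 - π d' = g h` for some `g`. As `h π` factors through `V`, `h π d' = 0`,
so `h = h g h` (`exists_regular_of_cokernel`). The endomorphism ring of `K` is local, so either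
`1 - h g` is invertible, whence `h = 0` and `K` is a summand of `W ∈ V`, which is excluded; or `h g` is
invertible, whence `W ⟶ K`, and with it every map from `V` to `K`, is zero. The vanishing of `Hom(K, V)`
is dual and uses kernels.
-/


open CategoryTheory CategoryTheory.Limits CategoryTheory.Pretriangulated

attribute [local instance] CategoryTheory.Limits.hasBinaryBiproducts_of_finite_biproducts

universe v u

namespace ClusterPaper

variable {T : Type u} [Category.{v} T] [Preadditive T] [HasZeroObject T]
  [HasShift T ℤ] [∀ n : ℤ, (shiftFunctor T n).Additive] [Pretriangulated T]
  [HasFiniteBiproducts T]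

/-- `X` is a direct summand of `Z`. -/
def IsSummand (X Z : T) : Prop :=
  ∃ (s : X ⟶ Z) (r : Z ⟶ X), s ≫ r = 𝟙 X

/-- The category is Krull–Schmidt: every object is a finite direct sum of objects
whose endomorphism rings are local. -/
def IsKrullSchmidt : Prop :=
  ∀ X : T, ∃ (n : ℕ) (f : Fin n → T),
    Nonempty (X ≅ ⨁ f) ∧ ∀ i, IsLocalRing (End (f i))

/-- A class of objects is closed under isomorphisms. -/
def IsoClosed (P : T → Prop) : Prop := ∀ ⦃X Y : T⦄, (X ≅ Y) → P X → P Y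

/-- A class of objects is closed under finite direct sums. -/
def SumClosed (P : T → Prop) : Prop :=
  ∀ ⦃X Y : T⦄, P X → P Y → P (X ⊞ Y)

/-- A class of objects is closed under direct summands. -/
def SummandClosed (P : T → Prop) : Prop := ∀ ⦃X Z : T⦄, IsSummand X Z → P Z → P X

/-- `Hom(X, Y[1]) = 0`, i.e. `E(X,Y) = 0` for the extriangulated structure on a
triangulated category. -/
def Ext1Zero (X Y : T) : Prop := ∀ f : X ⟶ Y⟦(1 : ℤ)⟧, f = 0

/-- The right perpendicular category `P^⊥1`. -/
def rightPerp (P : T → Prop) : T → Prop := fun X => ∀ ⦃C : T⦄, P C → Ext1Zero C X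

/-- The left perpendicular category `^⊥1 P`. -/
def leftPerp (P : T → Prop) : T → Prop := fun X => ∀ ⦃C : T⦄, P C → Ext1Zero X C

/-- A cotorsion pair `(U, V)`. -/
structure CotorsionPair (U V : T → Prop) : Prop where
  summandClosed_fst : SummandClosed U
  summandClosed_snd : SummandClosed V
  ext_zero : ∀ ⦃X Y : T⦄, U X → V Y → Ext1Zero X Y
  tri_left : ∀ B : T, ∃ (VB UB : T) (f : VB ⟶ UB) (g : UB ⟶ B) (h : B ⟶ VB⟦(1 : ℤ)⟧),
    V VB ∧ U UB ∧ Triangle.mk f g h ∈ distTriang T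
  tri_right : ∀ B : T, ∃ (VB UB : T) (f : B ⟶ VB) (g : VB ⟶ UB) (h : UB ⟶ B⟦(1 : ℤ)⟧),
    V VB ∧ U UB ∧ Triangle.mk f g h ∈ distTriang T

/-- `f : C₀ ⟶ X` is a right `P`-approximation of `X`. -/
def IsRightApprox (P : T → Prop) {C₀ X : T} (f : C₀ ⟶ X) : Prop :=
  ∀ ⦃C' : T⦄, P C' → ∀ g : C' ⟶ X, ∃ h : C' ⟶ C₀, h ≫ f = g

/-- `f : X ⟶ C₀` is a left `P`-approximation of `X`. -/
def IsLeftApprox (P : T → Prop) {X C₀ : T} (f : X ⟶ C₀) : Prop :=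
  ∀ ⦃C' : T⦄, P C' → ∀ g : X ⟶ C', ∃ h : C₀ ⟶ C', f ≫ h = g

/-- Every object admits a right `P`-approximation. -/
def ContravariantlyFinite (P : T → Prop) : Prop :=
  ∀ X : T, ∃ (C₀ : T) (f : C₀ ⟶ X), P C₀ ∧ IsRightApprox P f

/-- Every object admits a left `P`-approximation. -/
def CovariantlyFinite (P : T → Prop) : Prop :=
  ∀ X : T, ∃ (C₀ : T) (f : X ⟶ C₀), P C₀ ∧ IsLeftApprox P f

/-- A pre-cluster tilting subcategory. -/
structure PreClusterTilting (C : T → Prop) : Prop where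
  sumClosed : SumClosed C
  summandClosed : SummandClosed C
  rigid : ∀ ⦃X Y : T⦄, C X → C Y → Ext1Zero X Y
  contravariantlyFinite : ContravariantlyFinite C
  covariantlyFinite : CovariantlyFinite C
  perp_eq : rightPerp C = leftPerp C

/-- A cluster tilting subcategory. -/
structure ClusterTilting (C : T → Prop) extends PreClusterTilting C : Prop where
  eq_rightPerp : C = rightPerp C
  eq_leftPerp : C = leftPerp C

/-- `f` factors through an object of `D`. -/
def FactorsThru (D : T → Prop) {X Y : T} (f : X ⟶ Y) : Prop :=
  ∃ (Z : T) (g : X ⟶ Z) (h : Z ⟶ Y), D Z ∧ g ≫ h = f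

/-- The hom relation identifying two morphisms whose difference factors through `D`. -/
def quotRel (D : T → Prop) : HomRel T := fun {X Y} f g => FactorsThru D (f - g)

/-- The additive quotient category `T/D`. -/
abbrev QuotCat (D : T → Prop) := CategoryTheory.Quotient (quotRel D)

/-- A category is abelian (as a property): it admits an abelian structure. -/
def IsAbelian (A : Type*) [Category A] : Prop := Nonempty (Abelian A)

/-- An object is indecomposable: it is nonzero, and in any direct sum
decomposition one summand is zero. -/
def Indec (X : T) : Prop :=
  ¬ IsZero X ∧ ∀ (Y Z : T), (X ≅ Y ⊞ Z) → IsZero Y ∨ IsZero Z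

/-- `X ∈ CoCone(P, Q)`: there is a triangle `X → B → C' → X[1]` with `B ∈ P`, `C' ∈ Q`. -/
def CoCone (P Q : T → Prop) : T → Prop := fun X =>
  ∃ (B C' : T) (f : X ⟶ B) (g : B ⟶ C') (h : C' ⟶ X⟦(1 : ℤ)⟧),
    P B ∧ Q C' ∧ Triangle.mk f g h ∈ distTriang T

/-- `Y ∈ Cone(P, Q)`: there is a triangle `A → B → Y → A[1]` with `A ∈ P`, `B ∈ Q`. -/
def Cone (P Q : T → Prop) : T → Prop := fun Y =>
  ∃ (A B : T) (f : A ⟶ B) (g : B ⟶ Y) (h : Y ⟶ A⟦(1 : ℤ)⟧),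
    P A ∧ Q B ∧ Triangle.mk f g h ∈ distTriang T

/-- `U + V`: objects isomorphic to a direct sum of an object of `U` and an object of `V`. -/
def plusCat (U V : T → Prop) : T → Prop := fun X =>
  ∃ (A B : T), U A ∧ V B ∧ Nonempty (X ≅ A ⊞ B)

/-- A class of objects is closed under extensions. -/
def ExtClosed (P : T → Prop) : Prop :=
  ∀ ⦃A B C' : T⦄ (f : A ⟶ B) (g : B ⟶ C') (h : C' ⟶ A⟦(1 : ℤ)⟧),
    (Triangle.mk f g h ∈ distTriang T) → P A → P C' → P B

/-- The triangulated category `T` is connected: it is not the direct sum of two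
nonzero triangulated (iso-closed, summand-closed, extension-closed, mutually Hom-orthogonal)
subcategories. -/
def ConnectedCat : Prop :=
  ¬ ∃ (T₁ T₂ : T → Prop),
    IsoClosed T₁ ∧ IsoClosed T₂ ∧ SummandClosed T₁ ∧ SummandClosed T₂ ∧
    ExtClosed T₁ ∧ ExtClosed T₂ ∧
    (∃ X, T₁ X ∧ ¬ IsZero X) ∧ (∃ X, T₂ X ∧ ¬ IsZero X) ∧
    (∀ X : T, ∃ (A B : T), T₁ A ∧ T₂ B ∧ Nonempty (X ≅ A ⊞ B)) ∧
    (∀ ⦃X Y : T⦄, T₁ X → T₂ Y → ∀ f : X ⟶ Y, f = 0) ∧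
    (∀ ⦃X Y : T⦄, T₂ X → T₁ Y → ∀ f : X ⟶ Y, f = 0)

/-! ### Morphisms in the quotient category `T/D` -/

lemma quotRel_congruence {D : T → Prop} (hD : SumClosed D) {Z₀ : T} (hZ₀ : D Z₀) :
    Congruence (quotRel D) where
  comp_left := by
    rintro X Y Z f g g' ⟨W, a, b, hW, hab⟩
    exact ⟨W, f ≫ a, b, hW, by rw [Category.assoc, hab, Preadditive.comp_sub]⟩
  comp_right := by
    rintro X Y Z f f' g ⟨W, a, b, hW, hab⟩
    exact ⟨W, a, b ≫ g, hW, by rw [← Category.assoc, hab, Preadditive.sub_comp]⟩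
  equivalence :=
    { refl := fun f => ⟨Z₀, 0, 0, hZ₀, by simp⟩
      symm := by
        rintro f g ⟨W, a, b, hW, hab⟩
        exact ⟨W, -a, b, hW, by rw [Preadditive.neg_comp, hab, neg_sub]⟩
      trans := by
        rintro f g k ⟨W, a, b, hW, hab⟩ ⟨W', a', b', hW', hab'⟩
        refine ⟨W ⊞ W', biprod.lift a a', biprod.desc b b', hD hW hW', ?_⟩
        rw [biprod.lift_desc, hab, hab']
        abel }

/-- A morphism becomes zero in `T/D`, for any choice of zero morphisms there, exactly when it
factors through an object of `D`. -/
lemma quot_map_eq_zero_iff {D : T → Prop} (hD : SumClosed D) {Z₀ : T} (hZ₀ : D Z₀)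
    [HasZeroMorphisms (QuotCat D)] {X Y : T} (f : X ⟶ Y) :
    (Quotient.functor (quotRel D)).map f = 0 ↔ FactorsThru D f := by
  have := quotRel_congruence hD hZ₀
  -- Objects of `D` become zero objects, so a morphism through one of them becomes zero.
  have key : ∀ {A B : T} (g : A ⟶ B), FactorsThru D g →
      (Quotient.functor (quotRel D)).map g = 0 := by
    rintro A B g ⟨W, a, b, hW, rfl⟩
    have hid : 𝟙 ((Quotient.functor (quotRel D)).obj W) = 0 := by
      have h0 : ((Quotient.functor (quotRel D)).map (0 : W ⟶ W)) =
          (0 : (Quotient.functor (quotRel D)).obj W ⟶ (Quotient.functor (quotRel D)).obj W) := by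
        obtain ⟨z, hz⟩ := (Quotient.functor (quotRel D)).map_surjective
          (0 : (Quotient.functor (quotRel D)).obj W ⟶ (Quotient.functor (quotRel D)).obj W)
        rw [← hz, Quotient.functor_map_eq_iff]
        exact ⟨W, 0 - z, 𝟙 W, hW, by simp⟩
      rw [← h0, ← CategoryTheory.Functor.map_id, Quotient.functor_map_eq_iff]
      exact ⟨W, 𝟙 W, 𝟙 W - 0, hW, by simp⟩
    rw [Functor.map_comp, ← Category.comp_id ((Quotient.functor (quotRel D)).map a), hid]
    simp
  refine ⟨fun h => ?_, key f⟩
  have h0 := key (0 : X ⟶ Y) ⟨Z₀, 0, 0, hZ₀, by simp⟩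
  rw [← h0, Quotient.functor_map_eq_iff] at h
  simpa [quotRel] using h

lemma FactorsThru.eq_zero_of_right {D : T → Prop} {X Y : T} {f : X ⟶ Y} (hf : FactorsThru D f)
    (h : ∀ ⦃W : T⦄, D W → ∀ g : W ⟶ Y, g = 0) : f = 0 := by
  obtain ⟨W, a, b, hW, rfl⟩ := hf
  rw [h hW b, comp_zero]

lemma FactorsThru.eq_zero_of_left {D : T → Prop} {X Y : T} {f : X ⟶ Y} (hf : FactorsThru D f)
    (h : ∀ ⦃W : T⦄, D W → ∀ g : X ⟶ W, g = 0) : f = 0 := by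
  obtain ⟨W, a, b, hW, rfl⟩ := hf
  rw [h hW a, zero_comp]

/-- The cokernel of a morphism of `T/D`, described in terms of morphisms of `T`. -/
lemma exists_quot_cokernel {D : T → Prop} (hD : SumClosed D) {Z₀ : T} (hZ₀ : D Z₀)
    (hab : IsAbelian (QuotCat D)) {A B : T} (h : A ⟶ B) :
    ∃ (Q : T) (π : B ⟶ Q), FactorsThru D (h ≫ π) ∧
      (∀ ⦃E : T⦄ (c : B ⟶ E), FactorsThru D (h ≫ c) → ∃ d : Q ⟶ E, FactorsThru D (π ≫ d - c)) ∧
      (∀ ⦃E : T⦄ (t : Q ⟶ E), FactorsThru D (π ≫ t) → FactorsThru D t) := by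
  obtain ⟨_⟩ := hab
  have := quotRel_congruence hD hZ₀
  let F := Quotient.functor (quotRel D)
  obtain ⟨π, hπ⟩ := F.map_surjective (X := B) (Y := (cokernel (F.map h)).as) (cokernel.π (F.map h))
  refine ⟨_, π, ?_, fun E c hc => ?_, fun E t ht => ?_⟩
  · rw [← quot_map_eq_zero_iff hD hZ₀, Functor.map_comp]
    exact (congrArg _ hπ).trans (cokernel.condition (F.map h))
  · rw [← quot_map_eq_zero_iff hD hZ₀, Functor.map_comp] at hc
    obtain ⟨d, hd⟩ := F.map_surjective (X := (cokernel (F.map h)).as) (Y := E)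
      (cokernel.desc (F.map h) (F.map c) hc)
    refine ⟨d, (Quotient.functor_map_eq_iff (quotRel D) (π ≫ d) c).1 ?_⟩
    change F.map _ = F.map _
    rw [Functor.map_comp, hd, hπ]
    exact cokernel.π_desc _ _ _
  · rw [← quot_map_eq_zero_iff hD hZ₀, Functor.map_comp] at ht
    rw [← quot_map_eq_zero_iff hD hZ₀]
    change F.map π ≫ F.map t = 0 at ht
    rw [hπ] at ht
    exact (cancel_epi (cokernel.π (F.map h))).1 (ht.trans comp_zero.symm)

/-- The kernel of a morphism of `T/D`, described in terms of morphisms of `T`. -/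
lemma exists_quot_kernel {D : T → Prop} (hD : SumClosed D) {Z₀ : T} (hZ₀ : D Z₀)
    (hab : IsAbelian (QuotCat D)) {A B : T} (h : A ⟶ B) :
    ∃ (Q : T) (κ : Q ⟶ A), FactorsThru D (κ ≫ h) ∧
      (∀ ⦃E : T⦄ (c : E ⟶ A), FactorsThru D (c ≫ h) → ∃ d : E ⟶ Q, FactorsThru D (d ≫ κ - c)) ∧
      (∀ ⦃E : T⦄ (t : E ⟶ Q), FactorsThru D (t ≫ κ) → FactorsThru D t) := by
  obtain ⟨_⟩ := hab
  have := quotRel_congruence hD hZ₀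
  let F := Quotient.functor (quotRel D)
  obtain ⟨κ, hκ⟩ := F.map_surjective (X := (kernel (F.map h)).as) (Y := A) (kernel.ι (F.map h))
  refine ⟨_, κ, ?_, fun E c hc => ?_, fun E t ht => ?_⟩
  · rw [← quot_map_eq_zero_iff hD hZ₀, Functor.map_comp]
    change F.map κ ≫ F.map h = 0
    rw [hκ]
    exact kernel.condition (F.map h)
  · rw [← quot_map_eq_zero_iff hD hZ₀, Functor.map_comp] at hc
    obtain ⟨d, hd⟩ := F.map_surjective (X := E) (Y := (kernel (F.map h)).as)
      (kernel.lift (F.map h) (F.map c) hc)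
    refine ⟨d, (Quotient.functor_map_eq_iff (quotRel D) (d ≫ κ) c).1 ?_⟩
    change F.map _ = F.map _
    rw [Functor.map_comp, hd, hκ]
    exact kernel.lift_ι _ _ _
  · rw [← quot_map_eq_zero_iff hD hZ₀, Functor.map_comp] at ht
    rw [← quot_map_eq_zero_iff hD hZ₀]
    change F.map t ≫ F.map κ = 0 at ht
    rw [hκ] at ht
    exact (cancel_mono (kernel.ι (F.map h))).1 (ht.trans zero_comp.symm)

/-! ### Splitting lemmas -/

/-- In a triangle `X ⟶ Y ⟶ Z ⟶ X[1]` whose last three terms receive no nonzero morphism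
from `D`, existence of the cokernel of `h : X ⟶ Y` in `T/D` makes `h` a von Neumann regular
morphism, that is, `h = h g h` for some `g`. -/
lemma exists_regular_of_cokernel {D : T → Prop} (hD : SumClosed D) {Z₀ : T} (hZ₀ : D Z₀)
    (hab : IsAbelian (QuotCat D)) {X Y Z : T} {h : X ⟶ Y} {c : Y ⟶ Z} {r : Z ⟶ X⟦(1 : ℤ)⟧}
    (hT : Triangle.mk h c r ∈ distTriang T)
    (hY : ∀ ⦃W : T⦄, D W → ∀ g : W ⟶ Y, g = 0) (hZ : ∀ ⦃W : T⦄, D W → ∀ g : W ⟶ Z, g = 0)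
    (hX : ∀ ⦃W : T⦄, D W → ∀ g : W ⟶ X⟦(1 : ℤ)⟧, g = 0) :
    ∃ g : Y ⟶ X, h ≫ g ≫ h = h := by
  have hc : h ≫ c = 0 := comp_distTriang_mor_zero₁₂ _ hT
  have cr : c ≫ r = 0 := comp_distTriang_mor_zero₂₃ _ hT
  obtain ⟨Q, π, hπ, hdesc, hepi⟩ := exists_quot_cokernel hD hZ₀ hab h
  obtain ⟨d, hd⟩ := hdesc c ⟨Z₀, 0, 0, hZ₀, by simp [hc]⟩
  replace hd : π ≫ d = c := sub_eq_zero.1 (hd.eq_zero_of_right hZ)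
  have hdr : d ≫ r = 0 := by
    refine (hepi (d ≫ r) ⟨Z₀, 0, 0, hZ₀, ?_⟩).eq_zero_of_right hX
    rw [← Category.assoc, hd, cr, zero_comp]
  obtain ⟨d', hd'⟩ : ∃ d' : Q ⟶ Y, d = d' ≫ c := Triangle.coyoneda_exact₃ _ hT d hdr
  obtain ⟨g, hg⟩ : ∃ g : Y ⟶ X, 𝟙 Y - π ≫ d' = g ≫ h := by
    refine Triangle.coyoneda_exact₂ _ hT (𝟙 Y - π ≫ d') ?_
    change (𝟙 Y - π ≫ d') ≫ c = 0
    rw [Preadditive.sub_comp, Category.assoc, ← hd', hd, Category.id_comp, sub_self]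
  have hz : h ≫ π ≫ d' = 0 := by
    obtain ⟨W, a, b, hW, e⟩ := hπ
    rw [← Category.assoc, ← e, Category.assoc, hY hW (b ≫ d'), comp_zero]
  exact ⟨g, by rw [← hg, Preadditive.comp_sub, hz, sub_zero, Category.comp_id]⟩

/-- The dual of `exists_regular_of_cokernel`. -/
lemma exists_regular_of_kernel {D : T → Prop} (hD : SumClosed D) {Z₀ : T} (hZ₀ : D Z₀)
    (hab : IsAbelian (QuotCat D)) {X Y Z : T} {c : Z ⟶ Y} {h : Y ⟶ X} {δ : X ⟶ Z⟦(1 : ℤ)⟧}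
    (hT : Triangle.mk c h δ ∈ distTriang T)
    (hY : ∀ ⦃W : T⦄, D W → ∀ g : Y ⟶ W, g = 0) (hZ : ∀ ⦃W : T⦄, D W → ∀ g : Z ⟶ W, g = 0)
    (hX : ∀ ⦃W : T⦄, D W → ∀ g : X⟦(-1 : ℤ)⟧ ⟶ W, g = 0) :
    ∃ g : X ⟶ Y, h ≫ g ≫ h = h := by
  have hT' := inv_rot_of_distTriang _ hT
  obtain ⟨r, hr⟩ : ∃ r : X⟦(-1 : ℤ)⟧ ⟶ Z, r = (Triangle.mk c h δ).invRotate.mor₁ := ⟨_, rfl⟩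
  have ch : c ≫ h = 0 := comp_distTriang_mor_zero₁₂ _ hT
  have rc : r ≫ c = 0 := by rw [hr]; exact comp_distTriang_mor_zero₁₂ _ hT'
  obtain ⟨Q, κ, hκ, hlift, hmono⟩ := exists_quot_kernel hD hZ₀ hab h
  obtain ⟨d, hd⟩ := hlift c ⟨Z₀, 0, 0, hZ₀, by simp [ch]⟩
  replace hd : d ≫ κ = c := sub_eq_zero.1 (hd.eq_zero_of_left hZ)
  have hrd : r ≫ d = 0 := by
    refine (hmono (r ≫ d) ⟨Z₀, 0, 0, hZ₀, ?_⟩).eq_zero_of_left hX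
    rw [Category.assoc, hd, rc, zero_comp]
  obtain ⟨d', hd'⟩ : ∃ d' : Y ⟶ Q, d = c ≫ d' :=
    Triangle.yoneda_exact₂ _ hT' d (by rw [← hr]; exact hrd)
  obtain ⟨g, hg⟩ : ∃ g : X ⟶ Y, 𝟙 Y - d' ≫ κ = h ≫ g := by
    refine Triangle.yoneda_exact₂ _ hT (𝟙 Y - d' ≫ κ) ?_
    change c ≫ (𝟙 Y - d' ≫ κ) = 0
    rw [Preadditive.comp_sub, ← Category.assoc, ← hd', hd, Category.comp_id, sub_self]
  have hz : (d' ≫ κ) ≫ h = 0 := by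
    obtain ⟨W, a, b, hW, e⟩ := hκ
    rw [Category.assoc, ← e, ← Category.assoc, hY hW (d' ≫ a), zero_comp]
  exact ⟨g, by rw [← Category.assoc, ← hg, Preadditive.sub_comp, hz, sub_zero, Category.id_comp]⟩

lemma isIso_or_isIso_one_sub {X : T} [IsLocalRing (End X)] (e : X ⟶ X) :
    IsIso e ∨ IsIso (𝟙 X - e) := by
  have h := IsLocalRing.isUnit_or_isUnit_of_add_one
    (R := End X) (a := End.of e) (b := End.of (𝟙 X - e))
    (show e + (𝟙 X - e) = 𝟙 X by abel)
  rwa [isUnit_iff_isIso, isUnit_iff_isIso] at h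

/-! ### Cotorsion pairs -/

lemma CotorsionPair.mem_fst {U V : T → Prop} (h : CotorsionPair U V) {X : T}
    (hX : ∀ ⦃Y : T⦄, V Y → Ext1Zero X Y) : U X := by
  obtain ⟨VB, UB, f, g, δ, hV, hU, hT⟩ := h.tri_left X
  obtain ⟨s, hs⟩ : ∃ s : X ⟶ UB, 𝟙 X = s ≫ g :=
    Triangle.coyoneda_exact₃ _ hT (𝟙 X) (by rw [hX hV δ]; exact comp_zero)
  exact h.summandClosed_fst ⟨s, g, hs.symm⟩ hU

lemma shift_eq_zero {X Y : T} (n : ℤ) {f : X ⟶ Y} (hf : f⟦n⟧' = 0) : f = 0 :=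
  (shiftFunctor T n).map_injective (by rw [hf, Functor.map_zero])

/-- `Hom(X[-1], Y)` is identified with `Hom(X, Y[1])`. -/
lemma Ext1Zero.hom_shift_neg {X Y : T} (h : Ext1Zero X Y) (f : X⟦(-1 : ℤ)⟧ ⟶ Y) : f = 0 := by
  apply shift_eq_zero 1
  rw [← cancel_epi (shiftNegShift X (1 : ℤ)).inv, comp_zero]
  exact h _

/-- `Hom(X[1], Y[1])` is identified with `Hom(X, Y)`. -/
lemma Ext1Zero.of_hom_shift {X Y : T} (h : ∀ f : X ⟶ Y, f = 0) : Ext1Zero (X⟦(1 : ℤ)⟧) Y := by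
  intro f
  obtain ⟨f', rfl⟩ := (shiftFunctor T (1 : ℤ)).map_surjective f
  rw [h f', Functor.map_zero]

/-- `Hom(X, Y[-1][1])` is identified with `Hom(X, Y)`. -/
lemma Ext1Zero.of_hom_shift_neg {X Y : T} (h : ∀ f : X ⟶ Y, f = 0) :
    Ext1Zero X (Y⟦(-1 : ℤ)⟧) := by
  intro f
  rw [← cancel_mono (shiftNegShift Y (1 : ℤ)).hom, zero_comp]
  exact h _

lemma CotorsionPair.mem_snd {U V : T → Prop} (h : CotorsionPair U V) {X : T}
    (hX : ∀ ⦃Y : T⦄, U Y → Ext1Zero Y X) : V X := by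
  obtain ⟨VB, UB, f, g, δ, hV, hU, hT⟩ := h.tri_right X
  have hT' := inv_rot_of_distTriang _ hT
  obtain ⟨s, hs⟩ : ∃ s : VB ⟶ X, 𝟙 X = f ≫ s :=
    Triangle.yoneda_exact₂ _ hT' (𝟙 X) ((hX hU).hom_shift_neg _)
  exact h.summandClosed_snd ⟨f, s, hs.symm⟩ hV

/-- `U` contains the middle term of a triangle with outer terms in `U`. -/
lemma CotorsionPair.ext_fst {U V : T → Prop} (h : CotorsionPair U V) {A B C : T}
    {f : A ⟶ B} {g : B ⟶ C} {δ : C ⟶ A⟦(1 : ℤ)⟧} (hT : Triangle.mk f g δ ∈ distTriang T)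
    (hA : U A) (hC : U C) : U B := by
  refine h.mem_fst fun Y hY x => ?_
  obtain ⟨y, rfl⟩ : ∃ y : C ⟶ Y⟦(1 : ℤ)⟧, x = g ≫ y :=
    Triangle.yoneda_exact₂ _ hT x (h.ext_zero hA hY _)
  rw [h.ext_zero hC hY y, comp_zero]

/-! ### Objects of `U` outside `V` -/

/-- If `X ∈ U` has local endomorphism ring and is not in `V`, then `Hom(V, X) = 0`: in the right
`V`-approximation triangle `X' ⟶ W ⟶ X ⟶ X'[1]` the map `h : X ⟶ X'[1]` satisfies `h = h g h`, so by
locality it is zero, which would put `X` in `V`, or a split monomorphism. -/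
lemma hom_to_eq_zero {U V : T → Prop} (hVsum : SumClosed V)
    (hUV : CotorsionPair U V) (hVU : CotorsionPair V U) (habV : IsAbelian (QuotCat V))
    {X : T} [IsLocalRing (End X)] (hUX : U X) (hVX : ¬ V X) ⦃W₀ : T⦄ (hW₀ : V W₀)
    (a : W₀ ⟶ X) : a = 0 := by
  obtain ⟨X', W, f, p, h, hX', hW, hT⟩ := hVU.tri_left X
  have hWU : U W := hUV.ext_fst hT hX' hUX
  have hT₂ : Triangle.mk h (-f⟦(1 : ℤ)⟧') (-p⟦(1 : ℤ)⟧') ∈ distTriang T :=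
    rot_of_distTriang _ (rot_of_distTriang _ hT)
  obtain ⟨g, hg⟩ := exists_regular_of_cokernel hVsum hW habV hT₂
    (fun _ hA b => hVU.ext_zero hA hX' b) (fun _ hA b => hVU.ext_zero hA hWU b)
    (fun _ hA b => hVU.ext_zero hA hUX b)
  rcases isIso_or_isIso_one_sub (h ≫ g) with hi | hi
  · obtain ⟨b, rfl⟩ : ∃ b : W₀ ⟶ W, a = b ≫ p :=
      Triangle.coyoneda_exact₃ _ hT a (hVU.ext_zero hW₀ hX' _)
    have hp : p ≫ h = 0 := comp_distTriang_mor_zero₂₃ _ hT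
    rw [← cancel_mono (h ≫ g), zero_comp, Category.assoc, ← Category.assoc p, hp, zero_comp,
      comp_zero]
  · have hz : h = 0 := by
      rw [← cancel_epi (𝟙 X - h ≫ g), Preadditive.sub_comp, Category.assoc, hg, Category.id_comp,
        sub_self, comp_zero]
    obtain ⟨s, hs⟩ : ∃ s : X ⟶ W, 𝟙 X = s ≫ p :=
      Triangle.coyoneda_exact₃ _ hT (𝟙 X) (by rw [hz]; exact comp_zero)
    exact absurd (hVU.summandClosed_fst ⟨s, p, hs.symm⟩ hW) hVX

/-- The dual of `hom_to_eq_zero`: `Hom(X, V) = 0`. -/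
lemma hom_from_eq_zero {U V : T → Prop} (hVsum : SumClosed V)
    (hUV : CotorsionPair U V) (habV : IsAbelian (QuotCat V))
    {X : T} [IsLocalRing (End X)] (hUX : U X) (hVX : ¬ V X) ⦃W₀ : T⦄ (hW₀ : V W₀)
    (a : X ⟶ W₀) : a = 0 := by
  obtain ⟨W, X', i, q, δ, hW, hX', hT⟩ := hUV.tri_right X
  have hWU : U W := hUV.ext_fst hT hUX hX'
  have hT₁ := inv_rot_of_distTriang _ hT
  have hT₂ := inv_rot_of_distTriang _ hT₁
  obtain ⟨h, hh⟩ : ∃ h : X'⟦(-1 : ℤ)⟧ ⟶ X, h = (Triangle.mk i q δ).invRotate.mor₁ := ⟨_, rfl⟩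
  obtain ⟨g, hg⟩ : ∃ g : X ⟶ X'⟦(-1 : ℤ)⟧, h ≫ g ≫ h = h := by
    rw [hh]
    exact exists_regular_of_kernel hVsum hW habV hT₂
      (fun _ hA b => (hUV.ext_zero hX' hA).hom_shift_neg b)
      (fun _ hA b => (hUV.ext_zero hWU hA).hom_shift_neg b)
      (fun _ hA b => (hUV.ext_zero hUX hA).hom_shift_neg b)
  rcases isIso_or_isIso_one_sub (g ≫ h) with hi | hi
  · obtain ⟨b, rfl⟩ : ∃ b : W ⟶ W₀, a = i ≫ b :=
      Triangle.yoneda_exact₂ _ hT₁ a ((hUV.ext_zero hX' hW₀).hom_shift_neg _)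
    have hi : h ≫ i = 0 := by rw [hh]; exact comp_distTriang_mor_zero₁₂ _ hT₁
    rw [← cancel_epi (g ≫ h), comp_zero, Category.assoc, ← Category.assoc h, hi, zero_comp,
      comp_zero]
  · have hz : h = 0 := by
      rw [← cancel_mono (𝟙 X - g ≫ h), Preadditive.comp_sub, hg, Category.comp_id,
        sub_self, zero_comp]
    obtain ⟨s, hs⟩ : ∃ s : W ⟶ X, 𝟙 X = i ≫ s :=
      Triangle.yoneda_exact₂ _ hT₁ (𝟙 X) (by rw [← hh, hz]; exact zero_comp)
    exact absurd (hUV.summandClosed_snd ⟨i, s, hs.symm⟩ hW) hVX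

/-! ### Indecomposable objects -/

/-- A split monomorphism from a nonzero object into an indecomposable object is invertible: its
cone is a complementary summand. -/
lemma Indec.nonempty_iso_of_isSummand {K X : T} (hK : Indec K) (hX : ¬ IsZero X)
    (h : IsSummand X K) : Nonempty (K ≅ X) := by
  obtain ⟨s, r, hsr⟩ := h
  obtain ⟨Z, g, δ, hT⟩ := distinguished_cocone_triangle s
  have : Mono s := mono_of_mono_fac hsr
  have hδ : δ = 0 := Triangle.mor₃_eq_zero_of_mono₁ _ hT (inferInstanceAs (Mono s))
  obtain ⟨e, -, -⟩ := exists_iso_binaryBiproduct_of_distTriang _ hT hδ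
  have hZ : IsZero Z := (hK.2 X Z e).resolve_left hX
  exact ⟨e ≪≫ (isoBiprodZero hZ).symm⟩

lemma Indec.exists_iso_isLocalRing (hKS : IsKrullSchmidt (T := T)) {K : T} (hK : Indec K) :
    ∃ X : T, Nonempty (K ≅ X) ∧ IsLocalRing (End X) := by
  obtain ⟨n, f, ⟨e⟩, hf⟩ := hKS K
  cases n with
  | zero =>
    refine absurd ?_ hK.1
    rw [IsZero.iff_id_eq_zero, ← cancel_mono e.hom]
    ext j
    exact j.elim0
  | succ n =>
    refine ⟨f 0, hK.nonempty_iso_of_isSummand (fun hz => ?_)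
      ⟨biproduct.ι f 0 ≫ e.inv, e.hom ≫ biproduct.π f 0, by simp⟩, hf 0⟩
    have := hf 0
    exact one_ne_zero (α := End (f 0)) (hz.eq_of_src _ _)

lemma isZero_of_shift {X : T} (n : ℤ) (h : IsZero (X⟦n⟧)) : IsZero X :=
  (Functor.map_isZero (shiftFunctor T (-n)) h).of_iso (shiftShiftNeg X n).symm

lemma Indec.shift {K : T} (hK : Indec K) (n : ℤ) : Indec (K⟦n⟧) := by
  have := preservesBinaryBiproducts_of_preservesBiproducts (shiftFunctor T (-n))
  refine ⟨fun h => hK.1 (isZero_of_shift n h), fun Y Z e => ?_⟩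
  exact (hK.2 (Y⟦-n⟧) (Z⟦-n⟧) ((shiftShiftNeg K n).symm ≪≫ (shiftFunctor T (-n)).mapIso e ≪≫
    (shiftFunctor T (-n)).mapBiprod Y Z)).imp (isZero_of_shift _) (isZero_of_shift _)

/-- An indecomposable object of `U` outside `V` has both shifts in `U` and outside `V`, because it is
Hom-orthogonal to `V` on both sides. -/
lemma shift_mem (hKS : IsKrullSchmidt (T := T)) {U V : T → Prop} (hUiso : IsoClosed U)
    (hViso : IsoClosed V) (hVsum : SumClosed V)
    (hUV : CotorsionPair U V) (hVU : CotorsionPair V U) (habV : IsAbelian (QuotCat V))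
    {K : T} (hind : Indec K) (hUK : U K) (hVK : ¬ V K) :
    (U (K⟦(-1 : ℤ)⟧) ∧ ¬ V (K⟦(-1 : ℤ)⟧)) ∧ (U (K⟦(1 : ℤ)⟧) ∧ ¬ V (K⟦(1 : ℤ)⟧)) := by
  obtain ⟨X, ⟨e⟩, hloc⟩ := hind.exists_iso_isLocalRing hKS
  have hUX : U X := hUiso e hUK
  have hVX : ¬ V X := fun h => hVK (hViso e.symm h)
  have hto : ∀ ⦃W : T⦄, V W → ∀ f : W ⟶ K, f = 0 := fun W hW f => by
    rw [← cancel_mono e.hom, zero_comp]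
    exact hom_to_eq_zero hVsum hUV hVU habV hUX hVX hW _
  have hfrom : ∀ ⦃W : T⦄, V W → ∀ f : K ⟶ W, f = 0 := fun W hW f => by
    rw [← cancel_epi e.inv, comp_zero]
    exact hom_from_eq_zero hVsum hUV habV hUX hVX hW _
  refine ⟨⟨hVU.mem_snd fun W hW => Ext1Zero.of_hom_shift_neg (hto hW), fun h => hind.1 ?_⟩,
    ⟨hUV.mem_fst fun W hW => Ext1Zero.of_hom_shift (hfrom hW), fun h => hind.1 ?_⟩⟩
  -- If a shift of `K` were in `V`, the identity of `K` or of `K[1]` would be an extension class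
  -- between `U` and `V`.
  · rw [IsZero.iff_id_eq_zero, ← cancel_mono (shiftNegShift K (1 : ℤ)).inv, zero_comp]
    exact hUV.ext_zero hUK h _
  · refine isZero_of_shift 1 ?_
    rw [IsZero.iff_id_eq_zero]
    exact hVU.ext_zero h hUK _

open ZeroObject in
lemma plusCat_of_left {U V : T → Prop} (hVU : CotorsionPair V U) {X : T} (h : U X) :
    plusCat U V X := by
  obtain ⟨_, W, -, -, -, -, hW, -⟩ := hVU.tri_left X
  have h0 : V (0 : T) := hVU.summandClosed_fst ⟨0, 0, (isZero_zero T).eq_of_src _ _⟩ hW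
  exact ⟨X, 0, h, h0, ⟨isoBiprodZero (isZero_zero T)⟩⟩

open ZeroObject in
lemma plusCat_of_right {U V : T → Prop} (hUV : CotorsionPair U V) {X : T} (h : V X) :
    plusCat U V X := by
  obtain ⟨_, W, -, -, -, -, hW, -⟩ := hUV.tri_left X
  have h0 : U (0 : T) := hUV.summandClosed_fst ⟨0, 0, (isZero_zero T).eq_of_src _ _⟩ hW
  exact ⟨0, X, h0, h, ⟨isoZeroBiprod (isZero_zero T)⟩⟩

/-- Let `(U,V)`, `(V,U)` be cotorsion pairs with `C := U ∩ V` and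
`K := U + V`, suppose `T/U` and `T/V` are abelian and `K` contains a nonzero object with
no nonzero direct summand in `C`. Then for any indecomposable `K ∈ K` not in `C`, both
`K[-1]` and `K[1]` are indecomposable objects of `K` not in `C`. -/
theorem stmt13 [IsTriangulated T] (hKS : IsKrullSchmidt (T := T))
    (U V : T → Prop) (hUiso : IsoClosed U) (hUsum : SumClosed U)
    (hViso : IsoClosed V) (hVsum : SumClosed V)
    (hUV : CotorsionPair U V) (hVU : CotorsionPair V U)
    (habU : IsAbelian (QuotCat U)) (habV : IsAbelian (QuotCat V))
    (hne : ∃ X : T, plusCat U V X ∧ ¬ IsZero X ∧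
      ∀ Y : T, IsSummand Y X → (U Y ∧ V Y) → IsZero Y)
    {K : T} (hK : plusCat U V K) (hind : Indec K) (hKC : ¬ (U K ∧ V K)) :
    (plusCat U V (K⟦(-1 : ℤ)⟧) ∧ Indec (K⟦(-1 : ℤ)⟧) ∧
      ¬ (U (K⟦(-1 : ℤ)⟧) ∧ V (K⟦(-1 : ℤ)⟧))) ∧
    (plusCat U V (K⟦(1 : ℤ)⟧) ∧ Indec (K⟦(1 : ℤ)⟧) ∧
      ¬ (U (K⟦(1 : ℤ)⟧) ∧ V (K⟦(1 : ℤ)⟧))) := by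
  obtain ⟨A, B, hA, hB, ⟨e⟩⟩ := hK
  rcases hind.2 A B e with hz | hz
  · have hVK : V K := hViso (e ≪≫ (isoZeroBiprod hz).symm).symm hB
    obtain ⟨⟨h₁, h₂⟩, h₃, h₄⟩ := shift_mem hKS hViso hUiso hUsum hVU hUV habU hind hVK
      (fun h => hKC ⟨h, hVK⟩)
    exact ⟨⟨plusCat_of_right hUV h₁, hind.shift _, fun h => h₂ h.1⟩,
      plusCat_of_right hUV h₃, hind.shift _, fun h => h₄ h.1⟩
  · have hUK : U K := hUiso (e ≪≫ (isoBiprodZero hz).symm).symm hA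
    obtain ⟨⟨h₁, h₂⟩, h₃, h₄⟩ := shift_mem hKS hUiso hViso hVsum hUV hVU habV hind hUK
      (fun h => hKC ⟨hUK, h⟩)
    exact ⟨⟨plusCat_of_left hVU h₁, hind.shift _, fun h => h₂ h.2⟩,
      plusCat_of_left hVU h₃, hind.shift _, fun h => h₄ h.2⟩

end ClusterPaper
end

section
/- Let (U,V) and (V,U) be cotorsion pairs in T, set C := U ∩ V and K := U + V, the subcategory of objects isomorphic to X ⊕ Y with X in U and Y in V. Let K̂ be the subcategory of objects that are finite direct sums of indecomposable objects of K not lying in C, and let H_C := CoCone(C,C) be the subcategory of objects X admitting a distinguished triangle X → C¹ → C² → X[1] with C¹, C² in C. Assume that for every indecomposable object K of K not lying in C, both K[-1] and K[1] are indecomposable objects of K not lying in C. Then every object of T is isomorphic to X ⊕ Y with X in K̂ and Y in H_C, and every morphism from an object of K̂ to an object of H_C is zero, as is every morphism from an object of H_C to an object of K̂. -/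
/-!
Write `C = U ∩ V` and call an indecomposable object of `U ∪ V` outside `C` *good*. By hypothesis
good objects are stable under both shifts, and there are no nonzero extensions between `U ∪ V`
and `C`. Hence for `K` good, `Hom(K, C) ≅ Hom(K[1], C[1]) = 0` and
`Hom(C, K) ≅ Hom(C, K[-1][1]) = 0`. The long exact sequences of a triangle
`Y ⟶ C¹ ⟶ C² ⟶ Y[1]` then give `Hom(K, Y) = 0 = Hom(Y, K)` (`hom_to_coCone`,
`hom_from_coCone`), which is the orthogonality of `K̂` and `H_C`.

For the decomposition of an object `Z`, take a triangle `Z ⟶ W ⟶ W' ⟶ Z[1]` with `W ∈ V` and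
`W' ∈ U`. By the Krull–Schmidt property, `W ≅ A ⊞ B` and `W' ≅ A' ⊞ B'` with `A`, `A'` sums of good
objects and `B`, `B'` in `C` (`exists_split`). The components `A ⟶ B'` and `B ⟶ A'` vanish by the
above. So does `A ⟶ A'`: a good `L` in `U` has `L[-1]` in `U`, because `L[-1] ∈ V` would put the
identity of `L` in `Ext¹(U, V) = 0` (`not_mem_shift_neg`), and so
`Hom(K, L) = Ext¹(K, L[-1]) = 0` for `K ∈ V`. Therefore `W ⟶ W'` is the direct sum of
`0 : A ⟶ A'` and a morphism `B ⟶ B'` of `C`, and `Z` is the sum of the fibres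
`A'[-1] ⊞ A ∈ K̂` and `Fib(B ⟶ B') ∈ H_C` (`fibre_split`).
-/

open CategoryTheory CategoryTheory.Limits CategoryTheory.Pretriangulated

attribute [local instance] CategoryTheory.Limits.hasBinaryBiproducts_of_finite_biproducts

universe v u

namespace ClusterPaper

variable {T : Type u} [Category.{v} T] [Preadditive T] [HasZeroObject T]
  [HasShift T ℤ] [∀ n : ℤ, (shiftFunctor T n).Additive] [Pretriangulated T]
  [HasFiniteBiproducts T]

/-- `K̂`: the objects which are finite direct sums of indecomposable objects of
`K = U + V` not lying in `C = U ∩ V`. -/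
def hatK (U V : T → Prop) : T → Prop := fun X =>
  ∃ (n : ℕ) (f : Fin n → T),
    (∀ i, plusCat U V (f i) ∧ Indec (f i) ∧ ¬ (U (f i) ∧ V (f i))) ∧ Nonempty (X ≅ ⨁ f)

set_option linter.unusedSectionVars false

/-! ### Indecomposable objects and finite direct sums -/

/-- An object with local endomorphism ring is indecomposable: the idempotent projecting onto a
summand is a unit or its complement is, hence it is the identity or zero. -/
lemma indec_of_isLocalRing {X : T} (h : IsLocalRing (End X)) : Indec X := by
  refine ⟨fun hX => ?_, fun Y Z e => ?_⟩
  · exact one_ne_zero (α := End X) (hX.eq_of_src _ _)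
  -- An invertible idempotent kills the projection to the complementary summand.
  rcases IsLocalRing.isUnit_or_isUnit_of_add_one
    (show (show End X from e.hom ≫ biprod.fst ≫ biprod.inl ≫ e.inv) +
      (show End X from 𝟙 X - e.hom ≫ biprod.fst ≫ biprod.inl ≫ e.inv) = 1 from
      add_sub_cancel _ _) with hu | hu
  · right
    rw [isUnit_iff_isIso] at hu
    have hz : e.hom ≫ biprod.snd = 0 := by
      rw [← cancel_epi (show X ⟶ X from e.hom ≫ biprod.fst ≫ biprod.inl ≫ e.inv)]
      simp
    rw [IsZero.iff_id_eq_zero]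
    have : (biprod.inr : Z ⟶ Y ⊞ Z) ≫ e.inv ≫ e.hom ≫ biprod.snd = 𝟙 Z := by simp
    rw [← this, hz]
    simp
  · left
    rw [isUnit_iff_isIso] at hu
    have hz : e.hom ≫ biprod.fst = 0 := by
      rw [← cancel_epi (show X ⟶ X from 𝟙 X - e.hom ≫ biprod.fst ≫ biprod.inl ≫ e.inv)]
      simp [Preadditive.sub_comp]
    rw [IsZero.iff_id_eq_zero]
    have : (biprod.inl : Y ⟶ Y ⊞ Z) ≫ e.inv ≫ e.hom ≫ biprod.fst = 𝟙 Y := by simp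
    rw [← this, hz]
    simp

/-- Splitting off the first summand of a finite direct sum. -/
noncomputable def consIso {n : ℕ} (f : Fin (n + 1) → T) :
    (⨁ f) ≅ f 0 ⊞ ⨁ (fun i : Fin n => f i.succ) where
  hom := biprod.lift (biproduct.π f 0) (biproduct.lift fun i => biproduct.π f i.succ)
  inv := biprod.desc (biproduct.ι f 0) (biproduct.desc fun i => biproduct.ι f i.succ)
  hom_inv_id := by
    rw [biprod.lift_desc, biproduct.lift_desc, ← biproduct.total, Fin.sum_univ_succ]
  inv_hom_id := by
    ext
    · simp
    · simp [biproduct.ι_π_ne f (Fin.succ_ne_zero _).symm]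
    · simp [biproduct.ι_π_ne f (Fin.succ_ne_zero _)]
    · rename_i i j
      by_cases hij : i = j
      · subst hij; simp
      · have h1 : j.succ ≠ i.succ := fun h => hij (Fin.succ_injective _ h).symm
        have h2 : i.succ ≠ j.succ := fun h => hij (Fin.succ_injective _ h)
        simp [biproduct.ι_π_ne _ h2, biproduct.ι_π_ne _ hij]

/-- Finite direct sums of objects of the class `G`. -/
def FinSum (G : T → Prop) : T → Prop := fun X =>
  ∃ (n : ℕ) (f : Fin n → T), (∀ i, G (f i)) ∧ Nonempty (X ≅ ⨁ f)

lemma FinSum.of_iso {G : T → Prop} {X Y : T} (e : X ≅ Y) : FinSum G X → FinSum G Y := by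
  rintro ⟨n, f, hf, ⟨e'⟩⟩
  exact ⟨n, f, hf, ⟨e.symm ≪≫ e'⟩⟩

lemma isZero_biproduct_fin_zero (f : Fin 0 → T) : IsZero (⨁ f) := by
  rw [IsZero.iff_id_eq_zero]
  ext i
  exact i.elim0

lemma FinSum.of_isZero {G : T → Prop} {X : T} (h : IsZero X) : FinSum G X :=
  ⟨0, Fin.elim0, fun i => i.elim0, ⟨h.iso (isZero_biproduct_fin_zero _)⟩⟩

lemma FinSum.cons {G : T → Prop} {K X : T} (hK : G K) : FinSum G X → FinSum G (K ⊞ X) := by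
  rintro ⟨n, f, hf, ⟨e⟩⟩
  refine ⟨n + 1, Fin.cons K f, fun i => ?_,
    ⟨biprod.mapIso (Iso.refl K) e ≪≫ (consIso (Fin.cons K f : Fin (n + 1) → T)).symm⟩⟩
  refine Fin.cases ?_ (fun i => ?_) i
  · simpa using hK
  · simpa using hf i

lemma FinSum.induction {G Q : T → Prop} (iso : ∀ ⦃X Y : T⦄, (X ≅ Y) → Q X → Q Y)
    (zero : ∀ X : T, IsZero X → Q X) (cons : ∀ K X : T, G K → Q X → Q (K ⊞ X))
    {X : T} (hX : FinSum G X) : Q X := by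
  obtain ⟨n, f, hf, ⟨e⟩⟩ := hX
  refine iso e.symm ?_
  clear e
  induction n with
  | zero => exact zero _ (isZero_biproduct_fin_zero _)
  | succ n ih => exact iso (consIso f).symm (cons _ _ (hf 0) (ih _ fun i => hf i.succ))

/-- The isomorphism `Y ≅ X ⊞ Y` for a zero object `X`. -/
noncomputable def zeroBiprodIso {X : T} (Y : T) (h : IsZero X) : Y ≅ X ⊞ Y where
  hom := biprod.inr
  inv := biprod.snd
  hom_inv_id := by simp
  inv_hom_id := by
    ext
    · exact h.eq_of_src _ _
    · exact h.eq_of_src _ _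
    · simp
    · simp

/-- The associator `(X ⊞ Y) ⊞ Z ≅ X ⊞ (Y ⊞ Z)`. -/
noncomputable def biprodAssoc (X Y Z : T) : (X ⊞ Y) ⊞ Z ≅ X ⊞ (Y ⊞ Z) where
  hom := biprod.lift (biprod.fst ≫ biprod.fst)
    (biprod.lift (biprod.fst ≫ biprod.snd) biprod.snd)
  inv := biprod.lift (biprod.lift biprod.fst (biprod.snd ≫ biprod.fst))
    (biprod.snd ≫ biprod.snd)
  hom_inv_id := by ext <;> simp
  inv_hom_id := by ext <;> simp

lemma FinSum.add {G : T → Prop} {X Y : T} (hX : FinSum G X) (hY : FinSum G Y) :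
    FinSum G (X ⊞ Y) := by
  refine FinSum.induction (Q := fun X => FinSum G (X ⊞ Y)) ?_ ?_ ?_ hX
  · intro A B e h
    exact h.of_iso (biprod.mapIso e (Iso.refl Y))
  · intro A hA
    exact hY.of_iso (zeroBiprodIso Y hA)
  · intro K A hK h
    exact (h.cons hK).of_iso (biprodAssoc K A Y).symm

lemma FinSum.mono {G G' : T → Prop} (h : ∀ X, G X → G' X) {X : T} : FinSum G X → FinSum G' X := by
  rintro ⟨n, f, hf, e⟩
  exact ⟨n, f, fun i => h _ (hf i), e⟩

lemma FinSum.shift {G G' : T → Prop} (n : ℤ) (h : ∀ X : T, G X → G' (X⟦n⟧)) {X : T}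
    (hX : FinSum G X) : FinSum G' (X⟦n⟧) := by
  refine FinSum.induction (Q := fun X => FinSum G' (X⟦n⟧)) ?_ ?_ ?_ hX
  · intro A B e hA
    exact hA.of_iso ((shiftFunctor T n).mapIso e)
  · intro A hA
    exact FinSum.of_isZero ((shiftFunctor T n).map_isZero hA)
  · intro K A hK hA
    have : PreservesBinaryBiproduct K A (shiftFunctor T n) :=
      preservesBinaryBiproduct_of_preservesBiproduct _ _ _
    exact (hA.cons (h K hK)).of_iso ((shiftFunctor T n).mapBiprod K A).symm

lemma FinSum.hom_from_zero {G : T → Prop} {Y : T} (h : ∀ K, G K → ∀ f : K ⟶ Y, f = 0) {X : T}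
    (hX : FinSum G X) (f : X ⟶ Y) : f = 0 := by
  obtain ⟨n, g, hg, ⟨e⟩⟩ := hX
  rw [← cancel_epi e.inv]
  ext i
  rw [h _ (hg i) (biproduct.ι g i ≫ e.inv ≫ f)]
  simp

lemma FinSum.hom_to_zero {G : T → Prop} {Y : T} (h : ∀ K, G K → ∀ f : Y ⟶ K, f = 0) {X : T}
    (hX : FinSum G X) (f : Y ⟶ X) : f = 0 := by
  obtain ⟨n, g, hg, ⟨e⟩⟩ := hX
  rw [← cancel_mono e.hom]
  ext i
  have := h _ (hg i) (f ≫ e.hom ≫ biproduct.π g i)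
  simpa using this

/-- In a Krull–Schmidt category an object of a summand-closed class `P` splits into
indecomposables of `P` outside `Q`, and an object of `P ∩ Q`. -/
lemma exists_split (hKS : IsKrullSchmidt (T := T)) {P Q : T → Prop}
    (hPsum : SumClosed P) (hQsum : SumClosed Q) (hPs : SummandClosed P)
    (hP0 : ∀ X : T, IsZero X → P X) (hQ0 : ∀ X : T, IsZero X → Q X) {X : T} (hX : P X) :
    ∃ A B : T, FinSum (fun K => P K ∧ Indec K ∧ ¬ Q K) A ∧ (P B ∧ Q B) ∧
      Nonempty (X ≅ A ⊞ B) := by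
  obtain ⟨n, f, ⟨e⟩, hf⟩ := hKS X
  have hX' : FinSum (fun K => P K ∧ Indec K) X :=
    ⟨n, f, fun i => ⟨hPs ⟨biproduct.ι f i ≫ e.inv, e.hom ≫ biproduct.π f i, by simp⟩ hX,
      indec_of_isLocalRing (hf i)⟩, ⟨e⟩⟩
  refine FinSum.induction (Q := fun X => ∃ A B : T,
    FinSum (fun K => P K ∧ Indec K ∧ ¬ Q K) A ∧ (P B ∧ Q B) ∧ Nonempty (X ≅ A ⊞ B)) ?_ ?_ ?_ hX'
  · rintro Y Z e ⟨A, B, hA, hB, ⟨e'⟩⟩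
    exact ⟨A, B, hA, hB, ⟨e.symm ≪≫ e'⟩⟩
  · intro Y hY
    exact ⟨Y, Y, FinSum.of_isZero hY, ⟨hP0 _ hY, hQ0 _ hY⟩, ⟨zeroBiprodIso Y hY⟩⟩
  · rintro K Y ⟨hK, hKi⟩ ⟨A, B, hA, hB, ⟨e⟩⟩
    by_cases hQ : Q K
    · refine ⟨A, K ⊞ B, hA, ⟨hPsum hK hB.1, hQsum hQ hB.2⟩, ⟨?_⟩⟩
      exact biprod.mapIso (Iso.refl K) e ≪≫ (biprodAssoc K A B).symm ≪≫
        biprod.mapIso (biprod.braiding K A) (Iso.refl B) ≪≫ biprodAssoc A K B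
    · refine ⟨K ⊞ A, B, FinSum.cons ⟨hK, hKi, hQ⟩ hA, hB, ⟨?_⟩⟩
      exact biprod.mapIso (Iso.refl K) e ≪≫ (biprodAssoc K A B).symm

/-! ### Fibres of block-diagonal morphisms -/

/-- The binary biproduct of a pair of objects, compared with their product. -/
noncomputable def pairIso (φ : WalkingPair → T) : φ .left ⊞ φ .right ≅ ∏ᶜ φ where
  hom := Pi.lift fun j => WalkingPair.rec biprod.fst biprod.snd j
  inv := biprod.lift (Pi.π φ .left) (Pi.π φ .right)
  hom_inv_id := by ext <;> simp
  inv_hom_id := by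
    refine Pi.hom_ext _ _ ?_
    rintro (_ | _) <;> simp

lemma pairIso_naturality {φ ψ : WalkingPair → T} (m : ∀ j, φ j ⟶ ψ j) :
    biprod.map (m .left) (m .right) ≫ (pairIso ψ).hom = (pairIso φ).hom ≫ Limits.Pi.map m := by
  refine Pi.hom_ext _ _ ?_
  rintro (_ | _) <;> simp [pairIso]

/-- The direct sum of two distinguished triangles is distinguished. -/
lemma biprod_triangle (S R : Triangle T) (hS : S ∈ distTriang T) (hR : R ∈ distTriang T) :
    ∃ h, Triangle.mk (biprod.map S.mor₁ R.mor₁) (biprod.map S.mor₂ R.mor₂) h ∈ distTriang T := by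
  let F : WalkingPair → Triangle T := fun j => WalkingPair.rec S R j
  have hF : productTriangle F ∈ distTriang T :=
    productTriangle_distinguished F (by rintro (_ | _) <;> assumption)
  let e₁ := pairIso fun j => (F j).obj₁
  let e₃ := pairIso fun j => (F j).obj₃
  let m : (∏ᶜ fun j => (F j).obj₃) ⟶ (∏ᶜ fun j => (F j).obj₁)⟦(1 : ℤ)⟧ := (productTriangle F).mor₃
  refine ⟨e₃.hom ≫ m ≫ e₁.inv⟦(1 : ℤ)⟧', ?_⟩
  refine isomorphic_distinguished _ hF _
    (Triangle.isoMk _ _ e₁ (pairIso fun j => (F j).obj₂) e₃ ?_ ?_ ?_)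
  · exact pairIso_naturality fun j => (F j).mor₁
  · exact pairIso_naturality fun j => (F j).mor₂
  · change (e₃.hom ≫ m ≫ e₁.inv⟦(1 : ℤ)⟧') ≫ e₁.hom⟦(1 : ℤ)⟧' = e₃.hom ≫ m
    have := ((shiftFunctor T (1 : ℤ)).mapIso e₁).inv_hom_id
    rw [Category.assoc, Category.assoc]
    exact congrArg (e₃.hom ≫ ·) ((congrArg (m ≫ ·) this).trans (Category.comp_id m))

/-- If `g : V ⟶ W` is, up to isomorphism, the block-diagonal morphism with blocks `0 : A ⟶ A'`
and `b : B ⟶ B'`, then its fibre is the direct sum of `A'[-1] ⊞ A` and the fibre of `b`. -/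
lemma fibre_split {Z V W A B A' B' : T} {f : Z ⟶ V} {g : V ⟶ W} {h : W ⟶ Z⟦(1 : ℤ)⟧}
    (hT : Triangle.mk f g h ∈ distTriang T) (e : V ≅ A ⊞ B) (e' : W ≅ A' ⊞ B') (b : B ⟶ B')
    (hb : g ≫ e'.hom = e.hom ≫ biprod.map 0 b) :
    ∃ (F : T) (i : F ⟶ B) (k : B' ⟶ F⟦(1 : ℤ)⟧), Triangle.mk i b k ∈ distTriang T ∧
      Nonempty (Z ≅ (A'⟦(-1 : ℤ)⟧ ⊞ A) ⊞ F) := by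
  obtain ⟨F, i, k, hF⟩ := distinguished_cocone_triangle₁ b
  obtain ⟨F₀, i₀, k₀, hF₀⟩ := distinguished_cocone_triangle₁ (0 : A ⟶ A')
  obtain ⟨e₀, -⟩ := exists_iso_binaryBiproduct_of_distTriang _ (inv_rot_of_distTriang _ hF₀)
    (show (0 : A ⟶ A') ≫ _ = 0 from zero_comp)
  obtain ⟨m, hm⟩ := biprod_triangle _ _ hF₀ hF
  obtain ⟨c, hc₁, hc₂⟩ := complete_distinguished_triangle_morphism₁ _ _ hT hm e.hom e'.hom hb
  let φ : Triangle.mk f g h ⟶ Triangle.mk _ _ m :=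
    { hom₁ := c, hom₂ := e.hom, hom₃ := e'.hom, comm₁ := hc₁, comm₂ := hb, comm₃ := hc₂ }
  have hc : IsIso c :=
    isIso₁_of_isIso₂₃ φ hT hm (inferInstanceAs (IsIso e.hom)) (inferInstanceAs (IsIso e'.hom))
  let ec : Z ≅ F₀ ⊞ F := @asIso _ _ _ _ c hc
  exact ⟨F, i, k, hF, ⟨ec ≪≫ biprod.mapIso e₀ (Iso.refl F)⟩⟩

/-! ### Orthogonality -/

lemma eq_zero_of_shift {X Y : T} (n : ℤ) (f : X ⟶ Y) (h : ∀ g : X⟦n⟧ ⟶ Y⟦n⟧, g = 0) : f = 0 :=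
  (shiftFunctor T n).map_injective (by rw [h ((shiftFunctor T n).map f), Functor.map_zero])

/-- If `K` has no nonzero morphism to objects of `P`, nor `K[1]` to objects of `Q`, then `K` has
none to the fibre `Y` of a morphism `B ⟶ C` from `P` to `Q`, because of the exact sequence
`Hom(K, C[-1]) ⟶ Hom(K, Y) ⟶ Hom(K, B)`. -/
lemma hom_to_coCone {P Q : T → Prop} {K Y : T} (h₀ : ∀ W, P W → ∀ f : K ⟶ W, f = 0)
    (h₁ : ∀ W, Q W → ∀ f : K⟦(1 : ℤ)⟧ ⟶ W, f = 0) (hY : CoCone P Q Y) (f : K ⟶ Y) : f = 0 := by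
  obtain ⟨B, C, i, p, d, hB, hC, hT⟩ := hY
  obtain ⟨g, hg⟩ := Triangle.coyoneda_exact₂ _ (inv_rot_of_distTriang _ hT) f (h₀ B hB _)
  have hg0 : g = 0 := by
    refine eq_zero_of_shift 1 g fun g' => ?_
    have := h₁ C hC (g' ≫ (shiftNegShift C (1 : ℤ)).hom)
    exact (cancel_mono (shiftNegShift C (1 : ℤ)).hom).1 (this.trans zero_comp.symm)
  rw [hg, hg0]
  exact zero_comp

/-- Dual of `hom_to_coCone`: an object `K` such that neither `K` nor `K[1]` receives nonzero
morphisms from `P`, respectively `Q`, receives none from a fibre of a morphism from `P` to `Q`. -/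
lemma hom_from_coCone {P Q : T → Prop} {K Y : T} (h₀ : ∀ W, P W → ∀ f : W ⟶ K, f = 0)
    (h₁ : ∀ W, Q W → ∀ f : W ⟶ K⟦(1 : ℤ)⟧, f = 0) (hY : CoCone P Q Y) (f : Y ⟶ K) : f = 0 := by
  obtain ⟨B, C, i, p, d, hB, hC, hT⟩ := hY
  have hz : (Triangle.mk i p d).invRotate.mor₁ ≫ f = 0 := by
    refine eq_zero_of_shift 1 _ fun g' => ?_
    have := h₁ C hC ((shiftNegShift C (1 : ℤ)).inv ≫ g')
    exact (cancel_epi (shiftNegShift C (1 : ℤ)).inv).1 (this.trans comp_zero.symm)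
  obtain ⟨g, hg⟩ := Triangle.yoneda_exact₂ _ (inv_rot_of_distTriang _ hT) f hz
  rw [hg, h₀ B hB g]
  exact comp_zero

lemma plusCat_or {U V : T → Prop} (hU : IsoClosed U) (hV : IsoClosed V) {K : T}
    (h : plusCat U V K) (hK : Indec K) : U K ∨ V K := by
  obtain ⟨A, B, hA, hB, ⟨e⟩⟩ := h
  rcases hK.2 A B e with hz | hz
  · exact Or.inr (hV ((zeroBiprodIso B hz).trans e.symm) hB)
  · exact Or.inl (hU ((zeroBiprodIso A hz).trans ((biprod.braiding B A).trans e.symm)) hA)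

/-- A non-zero object of `U` cannot have `K[-1]` in `V`, as its identity would be an element of
`Ext¹(U, V) = 0`. -/
lemma not_mem_shift_neg {U V : T → Prop} (hUV : CotorsionPair U V) {K : T} (hK : U K)
    (hK0 : ¬ IsZero K) : ¬ V (K⟦(-1 : ℤ)⟧) := fun hv => hK0 <| by
  rw [IsZero.iff_id_eq_zero, ← cancel_mono (shiftNegShift K (1 : ℤ)).inv, zero_comp]
  exact hUV.ext_zero hK hv _

/-- A finite direct sum of objects of `G` admits no nonzero map to one of objects of `G'` if
there is none on the level of `G` and `G'`. -/
lemma FinSum.hom_zero {G G' : T → Prop} (h : ∀ K L, G K → G' L → ∀ f : K ⟶ L, f = 0) {X Y : T}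
    (hX : FinSum G X) (hY : FinSum G' Y) (f : X ⟶ Y) : f = 0 :=
  hX.hom_from_zero (fun K hK => hY.hom_to_zero fun L hL => h K L hK hL) f

lemma CotorsionPair.mem_of_isZero {U V : T → Prop} (h : CotorsionPair U V) {X : T}
    (hX : IsZero X) : U X := by
  obtain ⟨_, W, _, _, _, _, hW, _⟩ := h.tri_left X
  exact h.summandClosed_fst ⟨0, 0, hX.eq_of_src _ _⟩ hW

/-! ### The decomposition -/


/-- Assume that shifting preserves the indecomposable objects of
`K = U + V` not lying in `C`. Then every object of `T` decomposes as `X ⊞ Y` with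
`X ∈ K̂` and `Y ∈ H_C := CoCone(C,C)`, and all morphisms between `K̂` and `H_C`
(in either direction) vanish. -/
theorem stmt14 [IsTriangulated T] (hKS : IsKrullSchmidt (T := T))
    (U V : T → Prop) (hUiso : IsoClosed U) (hUsum : SumClosed U)
    (hViso : IsoClosed V) (hVsum : SumClosed V)
    (hUV : CotorsionPair U V) (hVU : CotorsionPair V U)
    (hshift : ∀ K : T, plusCat U V K → Indec K → ¬ (U K ∧ V K) →
      (plusCat U V (K⟦(-1 : ℤ)⟧) ∧ Indec (K⟦(-1 : ℤ)⟧) ∧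
        ¬ (U (K⟦(-1 : ℤ)⟧) ∧ V (K⟦(-1 : ℤ)⟧))) ∧
      (plusCat U V (K⟦(1 : ℤ)⟧) ∧ Indec (K⟦(1 : ℤ)⟧) ∧
        ¬ (U (K⟦(1 : ℤ)⟧) ∧ V (K⟦(1 : ℤ)⟧)))) :
    (∀ Z : T, ∃ (X Y : T), hatK U V X ∧ CoCone (fun W => U W ∧ V W) (fun W => U W ∧ V W) Y ∧
      Nonempty (Z ≅ X ⊞ Y)) ∧
    (∀ ⦃X Y : T⦄, hatK U V X → CoCone (fun W => U W ∧ V W) (fun W => U W ∧ V W) Y →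
      ∀ f : X ⟶ Y, f = 0) ∧
    (∀ ⦃X Y : T⦄, CoCone (fun W => U W ∧ V W) (fun W => U W ∧ V W) X → hatK U V Y →
      ∀ f : X ⟶ Y, f = 0) := by
  have hs : ∀ {K : T}, (plusCat U V K ∧ Indec K ∧ ¬ (U K ∧ V K)) → _ ∧ _ :=
    fun {K} hK => hshift K hK.1 hK.2.1 hK.2.2
  have hor : ∀ {K : T}, (plusCat U V K ∧ Indec K ∧ ¬ (U K ∧ V K)) → U K ∨ V K :=
    fun {K} hK => plusCat_or hUiso hViso hK.1 hK.2.1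
  -- As `K[1]` lies in `U ∪ V`, `Hom(K, C) ≅ Hom(K[1], C[1])` vanishes.
  have hto : ∀ {K : T}, (plusCat U V K ∧ Indec K ∧ ¬ (U K ∧ V K)) →
      ∀ W, (U W ∧ V W) → ∀ f : K ⟶ W, f = 0 := by
    intro K hK W hW f
    refine eq_zero_of_shift 1 f ?_
    rcases hor (hs hK).2 with h | h
    · exact hUV.ext_zero h hW.2
    · exact hVU.ext_zero h hW.1
  -- As `K[-1]` lies in `U ∪ V`, `Hom(C, K) ≅ Hom(C, K[-1][1])` vanishes.
  have hfrom : ∀ {K : T}, (plusCat U V K ∧ Indec K ∧ ¬ (U K ∧ V K)) →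
      ∀ W, (U W ∧ V W) → ∀ f : W ⟶ K, f = 0 := by
    intro K hK W hW f
    rw [← cancel_mono (shiftNegShift K (1 : ℤ)).inv, zero_comp]
    rcases hor (hs hK).1 with h | h
    · exact hVU.ext_zero hW.2 h _
    · exact hUV.ext_zero hW.1 h _
  obtain ⟨O, hO⟩ := HasZeroObject.zero (C := T)
  have goodU : ∀ K : T, (U K ∧ Indec K ∧ ¬ V K) →
      plusCat U V K ∧ Indec K ∧ ¬ (U K ∧ V K) := fun K hK =>
    ⟨⟨K, O, hK.1, hVU.mem_of_isZero hO,
      ⟨(zeroBiprodIso K hO).trans (biprod.braiding _ _)⟩⟩, hK.2.1, fun h => hK.2.2 h.2⟩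
  have goodV : ∀ K : T, (V K ∧ Indec K ∧ ¬ U K) →
      plusCat U V K ∧ Indec K ∧ ¬ (U K ∧ V K) := fun K hK =>
    ⟨⟨O, K, hUV.mem_of_isZero hO, hK.1, ⟨zeroBiprodIso K hO⟩⟩,
      hK.2.1, fun h => hK.2.2 h.1⟩
  -- Since `L[-1]` stays in `U`, `Hom(K, L) ≅ Ext¹(K, L[-1])` vanishes for `K` in `V`.
  have hVUzero : ∀ K L : T, (V K ∧ Indec K ∧ ¬ U K) → (U L ∧ Indec L ∧ ¬ V L) →
      ∀ f : K ⟶ L, f = 0 := by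
    intro K L hK hL f
    have hL' : U (L⟦(-1 : ℤ)⟧) := (hor (hs (goodU L hL)).1).resolve_right
      (not_mem_shift_neg hUV hL.1 hL.2.1.1)
    rw [← cancel_mono (shiftNegShift L (1 : ℤ)).inv, zero_comp]
    exact hVU.ext_zero hK.1 hL' _
  refine ⟨fun Z => ?_, fun X Y hX hY => ?_, fun X Y hX hY => ?_⟩
  -- `g` is block diagonal with a zero block away from `C`, so its fibre `Z` splits accordingly.
  · obtain ⟨W, W', f, g, h, hW, hW', hT⟩ := hUV.tri_right Z
    obtain ⟨A, B, hA, hB, ⟨e⟩⟩ := exists_split hKS hVsum hUsum hUV.summandClosed_snd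
      (fun _ => hVU.mem_of_isZero) (fun _ => hUV.mem_of_isZero) hW
    obtain ⟨A', B', hA', hB', ⟨e'⟩⟩ := exists_split hKS hUsum hVsum hUV.summandClosed_fst
      (fun _ => hUV.mem_of_isZero) (fun _ => hVU.mem_of_isZero) hW'
    have h₁ : ∀ x : A ⟶ A', x = 0 := FinSum.hom_zero hVUzero hA hA'
    have h₂ : ∀ x : A ⟶ B', x = 0 := hA.hom_from_zero fun K hK => hto (goodV K hK) B' hB'
    have h₃ : ∀ x : B ⟶ A', x = 0 :=
      hA'.hom_to_zero fun K hK => hfrom (goodU K hK) B hB.symm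
    obtain ⟨F, i, k, hF, ⟨c⟩⟩ := fibre_split hT e e'
      (biprod.inr ≫ e.inv ≫ g ≫ e'.hom ≫ biprod.snd) (by
        rw [← cancel_epi e.inv, Iso.inv_hom_id_assoc]
        ext
        · exact (h₁ _).trans (by simp)
        · exact (h₂ _).trans (by simp)
        · exact (h₃ _).trans (by simp)
        · simp)
    refine ⟨_, F, ?_, ⟨B, B', i, _, k, hB.symm, hB', hF⟩, ⟨c⟩⟩
    exact FinSum.add (FinSum.shift (-1) (fun K hK => (hs (goodU K hK)).1) hA')
      (FinSum.mono goodV hA)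
  · exact FinSum.hom_from_zero
      (fun K hK => fun f => hom_to_coCone (hto hK) (hto (hs hK).2) hY f) hX
  · exact FinSum.hom_to_zero
      (fun K hK => fun f => hom_from_coCone (hfrom hK) (hfrom (hs hK).2) hX f) hY

end ClusterPaper
end

section
/- Let C be a pre-cluster tilting subcategory of B and set K := C^⊥1 (which equals ^⊥1C since C is pre-cluster tilting). Then the following are equivalent: (a) C is precisely the subcategory of all objects of B that are both projective and injective; (b) every object of B belongs to K; (c) every object X fitting into a short exact sequence 0 → X → C¹ → C² → 0 with C¹, C² in C belongs to C. -/
/-!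
Epic right `C`-approximations of projectives split, so `C` contains all projectives. If every object
of `C` is projective, then `C^⊥1` is the whole category, hence so is `^⊥1 C`, which makes every
object of `C` injective; thus (a) amounts to the projectivity of the objects of `C`
(`PreClusterTilting.eq_projective_injective`). Given `Y` in `C`, take a projective presentation
`0 → X → P → Y → 0`. Under (b) it splits because `X` lies in `C^⊥1`; under (c), `X` lies in `C`
because `P` and `Y` do, and it splits by rigidity. Either way `Y` is a summand of `P`.
Conversely, under (a) every short exact sequence ending in an object of `C` splits, which gives (b),
and also (c) since `C` is closed under summands.
-/

open CategoryTheory CategoryTheory.Limits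

attribute [local instance] CategoryTheory.Abelian.hasFiniteBiproducts

universe v u

namespace ClusterPaperAb

variable {B : Type u} [Category.{v} B] [Abelian B]

/-- `X` is a direct summand of `Z`. -/
def IsSummand (X Z : B) : Prop :=
  ∃ (s : X ⟶ Z) (r : Z ⟶ X), s ≫ r = 𝟙 X

/-- The category is Krull–Schmidt: every object is a finite direct sum of objects
whose endomorphism rings are local. -/
def IsKrullSchmidt : Prop :=
  ∀ X : B, ∃ (n : ℕ) (f : Fin n → B),
    Nonempty (X ≅ ⨁ f) ∧ ∀ i, IsLocalRing (End (f i))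

/-- A class of objects is closed under isomorphisms. -/
def IsoClosed (P : B → Prop) : Prop := ∀ ⦃X Y : B⦄, (X ≅ Y) → P X → P Y

/-- A class of objects is closed under finite direct sums. -/
def SumClosed (P : B → Prop) : Prop := ∀ ⦃X Y : B⦄, P X → P Y → P (X ⊞ Y)

/-- A class of objects is closed under direct summands. -/
def SummandClosed (P : B → Prop) : Prop := ∀ ⦃X Z : B⦄, IsSummand X Z → P Z → P X

/-- `0 → X → E → Y → 0` is a short exact sequence. -/
def IsSES {X E Y : B} (f : X ⟶ E) (g : E ⟶ Y) : Prop :=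
  ∃ w : f ≫ g = 0, (ShortComplex.mk f g w).ShortExact

/-- A short exact sequence `0 → X → E → Y → 0` splits. -/
def Splits {X E Y : B} (f : X ⟶ E) (g : E ⟶ Y) : Prop :=
  ∃ r : E ⟶ X, f ≫ r = 𝟙 X

/-- `C` is rigid: every short exact sequence with both end terms in `C` splits,
i.e. `Ext¹(C, C) = 0`. -/
def Rigid (C : B → Prop) : Prop :=
  ∀ ⦃X E Y : B⦄ (f : X ⟶ E) (g : E ⟶ Y), C X → C Y → IsSES f g → Splits f g

/-- `C^⊥1`: the objects `X` such that every short exact sequence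
`0 → X → E → C → 0` with `C ∈ C` splits. -/
def rightPerp (C : B → Prop) : B → Prop := fun X =>
  ∀ ⦃Cb E : B⦄ (f : X ⟶ E) (g : E ⟶ Cb), C Cb → IsSES f g → Splits f g

/-- `^⊥1 C`: the objects `X` such that every short exact sequence
`0 → C → E → X → 0` with `C ∈ C` splits. -/
def leftPerp (C : B → Prop) : B → Prop := fun X =>
  ∀ ⦃Cb E : B⦄ (f : Cb ⟶ E) (g : E ⟶ X), C Cb → IsSES f g → Splits f g

/-- `f : C₀ ⟶ X` is a right `C`-approximation of `X`. -/
def IsRightApprox (C : B → Prop) {C₀ X : B} (f : C₀ ⟶ X) : Prop :=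
  ∀ ⦃C' : B⦄, C C' → ∀ g : C' ⟶ X, ∃ h : C' ⟶ C₀, h ≫ f = g

/-- `f : X ⟶ C₀` is a left `C`-approximation of `X`. -/
def IsLeftApprox (C : B → Prop) {X C₀ : B} (f : X ⟶ C₀) : Prop :=
  ∀ ⦃C' : B⦄, C C' → ∀ g : X ⟶ C', ∃ h : C₀ ⟶ C', f ≫ h = g

/-- Every object admits an epic right `C`-approximation. -/
def StronglyContravariantlyFinite (C : B → Prop) : Prop :=
  ∀ X : B, ∃ (C₀ : B) (f : C₀ ⟶ X), C C₀ ∧ Epi f ∧ IsRightApprox C f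

/-- Every object admits a monic left `C`-approximation. -/
def StronglyCovariantlyFinite (C : B → Prop) : Prop :=
  ∀ X : B, ∃ (C₀ : B) (f : X ⟶ C₀), C C₀ ∧ Mono f ∧ IsLeftApprox C f

/-- A pre-cluster tilting subcategory of the abelian category `B`. -/
structure PreClusterTilting (C : B → Prop) : Prop where
  sumClosed : SumClosed C
  summandClosed : SummandClosed C
  rigid : Rigid C
  contra : StronglyContravariantlyFinite C
  cova : StronglyCovariantlyFinite C
  perp_eq : rightPerp C = leftPerp C

/-- `f` factors through an object of `D`. -/
def FactorsThru (D : B → Prop) {X Y : B} (f : X ⟶ Y) : Prop :=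
  ∃ (Z : B) (g : X ⟶ Z) (h : Z ⟶ Y), D Z ∧ g ≫ h = f

/-- The hom relation identifying morphisms whose difference factors through `D`. -/
def quotRel (D : B → Prop) : HomRel B := fun {X Y} f g => FactorsThru D (f - g)

/-- The additive quotient category `B/D`. -/
abbrev QuotCat (D : B → Prop) := CategoryTheory.Quotient (quotRel D)

/-- A category is abelian (as a property): it admits an abelian structure. -/
def IsAbelian (A : Type*) [Category A] : Prop := Nonempty (Abelian A)

/-- The subcategory of projective-injective objects. -/
def PI : B → Prop := fun X => Projective X ∧ Injective X

/-- A class of objects is closed under extensions. -/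
def ExtClosed (P : B → Prop) : Prop :=
  ∀ ⦃X Y Z : B⦄ (f : X ⟶ Y) (g : Y ⟶ Z), IsSES f g → P X → P Z → P Y

/-- The quotient `B/(P ∩ I)` is connected: `B` is not the direct sum, modulo
projective-injectives, of two subcategories each containing a non-projective-injective
object. -/
def ConnectedModPI : Prop :=
  ¬ ∃ (B₁ B₂ : B → Prop),
    (∀ X : B, PI X → B₁ X) ∧ (∀ X : B, PI X → B₂ X) ∧
    IsoClosed B₁ ∧ IsoClosed B₂ ∧ SummandClosed B₁ ∧ SummandClosed B₂ ∧
    ExtClosed B₁ ∧ ExtClosed B₂ ∧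
    (∃ X, B₁ X ∧ ¬ PI X) ∧ (∃ X, B₂ X ∧ ¬ PI X) ∧
    (∀ X : B, ∃ (A A' : B), B₁ A ∧ B₂ A' ∧ Nonempty (X ≅ A ⊞ A')) ∧
    (∀ ⦃X Y : B⦄, B₁ X → B₂ Y → ∀ f : X ⟶ Y, FactorsThru PI f) ∧
    (∀ ⦃X Y : B⦄, B₂ X → B₁ Y → ∀ f : X ⟶ Y, FactorsThru PI f)

/-- `C` contains the projectives: an epic right `C`-approximation of a projective object
splits, exhibiting it as a summand of an object of `C`. -/
theorem PreClusterTilting.of_projective {C : B → Prop} (hC : PreClusterTilting C) {X : B}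
    (hX : Projective X) : C X := by
  obtain ⟨C₀, f, hC₀, _, _⟩ := hC.contra X
  exact hC.summandClosed ⟨Projective.factorThru (𝟙 X) f, f, Projective.factorThru_comp _ _⟩ hC₀

theorem isSES_kernel {X Y : B} (g : X ⟶ Y) [Epi g] : IsSES (kernel.ι g) g :=
  ⟨kernel.condition g,
    { exact := ShortComplex.exact_of_f_is_kernel _ (kernelIsKernel g)
      mono_f := inferInstanceAs (Mono (kernel.ι g))
      epi_g := inferInstanceAs (Epi g) }⟩

theorem isSES_cokernel {X Y : B} (f : X ⟶ Y) [Mono f] : IsSES f (cokernel.π f) :=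
  ⟨cokernel.condition f,
    { exact := ShortComplex.exact_of_g_is_cokernel _ (cokernelIsCokernel f)
      mono_f := inferInstanceAs (Mono f)
      epi_g := inferInstanceAs (Epi (cokernel.π f)) }⟩

theorem IsSES.exists_section {X E Y : B} {f : X ⟶ E} {g : E ⟶ Y} (h : IsSES f g)
    (hs : Splits f g) : ∃ s : Y ⟶ E, s ≫ g = 𝟙 Y := by
  obtain ⟨w, h⟩ := h
  obtain ⟨r, hr⟩ := hs
  have := h.epi_g
  exact ⟨_, (ShortComplex.Splitting.ofExactOfRetraction _ h.exact r hr h.epi_g).s_g⟩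

theorem IsSES.splits_of_projective {X E Y : B} {f : X ⟶ E} {g : E ⟶ Y} (h : IsSES f g)
    (hY : Projective Y) : Splits f g := by
  obtain ⟨w, h⟩ := h
  have := h.epi_g
  have := h.mono_f
  exact ⟨_, (ShortComplex.Splitting.ofExactOfSection _ h.exact (Projective.factorThru (𝟙 Y) g)
    (Projective.factorThru_comp _ _) h.mono_f).f_r⟩

/-- It suffices to split the projective presentation `0 → ker π → P → Y → 0`. -/
theorem projective_of_splits [EnoughProjectives B] {Y : B}
    (h : Splits (kernel.ι (Projective.π Y)) (Projective.π Y)) : Projective Y := by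
  obtain ⟨s, hs⟩ := (isSES_kernel (Projective.π Y)).exists_section h
  exact (Retract.mk s (Projective.π Y) hs).projective

/-- It suffices to split the injective copresentation `0 → X → I → coker ι → 0`. -/
theorem injective_of_splits [EnoughInjectives B] {X : B}
    (h : Splits (Injective.ι X) (cokernel.π (Injective.ι X))) : Injective X := by
  obtain ⟨r, hr⟩ := h
  exact (Retract.mk (Injective.ι X) r hr).injective

/-- When all objects of `C` are projective, `C^⊥1` is the whole category; as it equals `^⊥1 C`,
the objects of `C` are also injective. -/
theorem PreClusterTilting.eq_projective_injective [EnoughInjectives B] {C : B → Prop}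
    (hC : PreClusterTilting C) (hP : ∀ X, C X → Projective X) (X : B) :
    C X ↔ (Projective X ∧ Injective X) := by
  refine ⟨fun hX => ⟨hP X hX, injective_of_splits ?_⟩, fun h => hC.of_projective h.1⟩
  have hl : leftPerp C (cokernel (Injective.ι X)) := by
    rw [← hC.perp_eq]
    exact fun _ _ _ _ hY hS => hS.splits_of_projective (hP _ hY)
  exact hl _ _ hX (isSES_cokernel _)

/-- Let `C` be pre-cluster tilting and `K := C^⊥1` (which equals `^⊥1C`).
The following are equivalent: (a) `C` is exactly the subcategory of projective-injective
objects; (b) every object of `B` lies in `K`; (c) every `X` fitting into a short exact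
sequence `0 → X → C¹ → C² → 0` with `C¹, C² ∈ C` lies in `C`. -/
theorem stmt16 [EnoughProjectives B] [EnoughInjectives B]
    (hKS : IsKrullSchmidt (B := B))
    (C : B → Prop) (hCiso : IsoClosed C) (hC : PreClusterTilting C) :
    ((∀ X : B, C X ↔ (Projective X ∧ Injective X)) ↔ (∀ X : B, rightPerp C X)) ∧
    ((∀ X : B, C X ↔ (Projective X ∧ Injective X)) ↔
      (∀ ⦃X C₁ C₂ : B⦄ (f : X ⟶ C₁) (g : C₁ ⟶ C₂),
        C C₁ → C C₂ → IsSES f g → C X)) := by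
  refine ⟨⟨fun ha X Y E f g hY hS => hS.splits_of_projective ((ha Y).1 hY).1, fun hb => ?_⟩,
    ⟨fun ha X C₁ C₂ f g h₁ h₂ hS => ?_, fun hc => ?_⟩⟩
  · exact hC.eq_projective_injective fun Y hY =>
      projective_of_splits (hb _ _ _ hY (isSES_kernel _))
  · obtain ⟨r, hr⟩ := hS.splits_of_projective ((ha C₂).1 h₂).1
    exact hC.summandClosed ⟨f, r, hr⟩ h₁
  · refine hC.eq_projective_injective fun Y hY => projective_of_splits ?_
    -- The projective term of the presentation lies in `C`, so by (c) the kernel does too, and rigidity applies.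
    have hS := isSES_kernel (Projective.π Y)
    exact hC.rigid _ _ (hc _ _ (hC.of_projective inferInstance) hY hS) hY hS

end ClusterPaperAb
end

section
/- If C is a rigid subcategory of B that is closed under direct summands and strongly contravariantly finite, then (C, C^⊥1) is a cotorsion pair: C^⊥1 is closed under direct summands, every short exact sequence 0 → V → E → C → 0 with C in C and V in C^⊥1 splits, and every object B of B admits short exact sequences 0 → V_B → U_B → B → 0 and 0 → B → V^B → U^B → 0 with U_B, U^B in C and V_B, V^B in C^⊥1. -/
/-!
The first vanishing condition is the definition of `rightPerp`, so the content lies in the two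
approximation sequences and closure under summands.

A short exact sequence `0 → X → E → Y → 0` with `Y ∈ C` lets every map `X ⟶ V` with
`V ∈ C^⊥1` extend to `E` (push the sequence out along `X ⟶ V` and split the result; see
`rightPerp_extend`). Closure under summands follows at once.

The key fact is `rightPerp_of_isPullback`: if `f : U ⟶ Y` is a right `C`-approximation with
`U ∈ C`, and `J` is injective, then the pullback of any `p : J ⟶ Y` along `f` lies in `C^⊥1`.
With `J = 0` this is Wakamatsu's lemma, that the kernel of `f` lies in `C^⊥1`, which gives the
first sequence. With `p : J ⟶ J / X` the cokernel of an embedding `X ⟶ J` into an injective, the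
pullback sits in `0 → X → J ×_Y U → U → 0`, which is the second sequence.
-/

open CategoryTheory CategoryTheory.Limits

attribute [local instance] CategoryTheory.Abelian.hasFiniteBiproducts

universe v u

namespace ClusterPaperAb

variable {B : Type u} [Category.{v} B] [Abelian B]

/-- Maps into `C^⊥1` extend along the inclusion of a short exact sequence ending in `C`. -/
lemma rightPerp_extend {C : B → Prop} {V X E Y : B} (hV : rightPerp C V) (hY : C Y)
    {a : X ⟶ E} {g : E ⟶ Y} (h : IsSES a g) (x : X ⟶ V) : ∃ φ : E ⟶ V, a ≫ φ = x := by
  obtain ⟨w, hs⟩ := h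
  have : Mono a := hs.mono_f
  have : Epi g := hs.epi_g
  have hw : a ≫ g = x ≫ (0 : V ⟶ Y) := by rw [w, comp_zero]
  have w' : pushout.inr a x ≫ pushout.desc g 0 hw = 0 := pushout.inr_desc _ _ _
  have : Epi (pushout.desc g 0 hw) := epi_of_epi_fac (pushout.inl_desc g 0 hw)
  obtain ⟨r, hr⟩ := hV (pushout.inr a x) (pushout.desc g 0 hw) hY
    ⟨w', { exact := ShortComplex.exact_of_g_is_cokernel _
            (CokernelCofork.IsColimit.ofπ' _ w' fun {A} k hk =>
              have hz : a ≫ pushout.inl a x ≫ k = 0 := by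
                rw [pushout.condition_assoc, hk, comp_zero]
              ⟨hs.exact.desc (pushout.inl a x ≫ k) hz, by
                apply pushout.hom_ext
                · rw [pushout.inl_desc_assoc]
                  exact hs.exact.g_desc (pushout.inl a x ≫ k) hz
                · rw [pushout.inr_desc_assoc, zero_comp, hk]⟩)
           mono_f := inferInstance
           epi_g := this }⟩
  exact ⟨pushout.inl a x ≫ r, by rw [pushout.condition_assoc, hr, Category.comp_id]⟩

lemma rightPerp_summandClosed (C : B → Prop) : SummandClosed (rightPerp C) := by
  rintro X Z ⟨s, r, hsr⟩ hZ Y E a g hY h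
  obtain ⟨φ, hφ⟩ := rightPerp_extend hZ hY h s
  exact ⟨φ ≫ r, by rw [← Category.assoc, hφ, hsr]⟩

/-- Generalization of Wakamatsu's lemma; the usual form is the case `J = 0`. -/
lemma rightPerp_of_isPullback {C : B → Prop} (hrigid : Rigid C) {P J U Y : B}
    {q : P ⟶ J} {t : P ⟶ U} {p : J ⟶ Y} {f : U ⟶ Y} [Injective J] (hU : C U)
    (hf : IsRightApprox C f) (hP : IsPullback q t p f) : rightPerp C P := by
  intro C' E a g hC' h
  obtain ⟨χ, hχ⟩ := rightPerp_extend (fun _ _ a g hY h => hrigid a g hU hY h) hC' h t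
  obtain ⟨w, hs⟩ := h
  have : Mono a := hs.mono_f
  have : Epi g := hs.epi_g
  have hφ : a ≫ Injective.factorThru q a = q := Injective.comp_factorThru q a
  set φ := Injective.factorThru q a
  -- The square over `Y` formed by the two extensions commutes on `P`, so its defect is a map
  -- `ψ : C' ⟶ Y`; lifting `ψ` through the approximation corrects the extension of `t`.
  have hz : a ≫ (φ ≫ p - χ ≫ f) = 0 := by
    rw [Preadditive.comp_sub, reassoc_of% hφ, reassoc_of% hχ, hP.w, sub_self]
  obtain ⟨k, hk⟩ := hf hC' (hs.exact.desc (φ ≫ p - χ ≫ f) hz)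
  have hψ : g ≫ k ≫ f = φ ≫ p - χ ≫ f := by
    rw [hk]; exact hs.exact.g_desc _ hz
  refine ⟨hP.lift φ (χ + g ≫ k) (by simp [hψ]), hP.hom_ext ?_ ?_⟩
  · simp [hφ]
  · simp [hχ, reassoc_of% w]

open ZeroObject in
lemma rightPerp_kernel {C : B → Prop} (hrigid : Rigid C) {U X : B} {f : U ⟶ X} (hU : C U)
    (hf : IsRightApprox C f) : rightPerp C (kernel f) := by
  have : Injective (0 : B) := Injective.zero_injective
  refine rightPerp_of_isPullback hrigid (q := (0 : kernel f ⟶ (0 : B))) (t := kernel.ι f)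
    (p := 0) hU hf ⟨⟨by simp⟩, ⟨PullbackCone.IsLimit.mk _
      (fun s => kernel.lift f s.snd (by rw [← s.condition, comp_zero])) ?_ ?_ ?_⟩⟩
  · intro s
    exact (isZero_zero B).eq_of_tgt _ _
  · intro s
    simp
  · intro s m _ hm
    rw [← cancel_mono (kernel.ι f), hm, kernel.lift_ι]

/-- If `C` is rigid, closed under direct summands and strongly
contravariantly finite, then `(C, C^⊥1)` is a cotorsion pair: `C^⊥1` is closed under
direct summands, every short exact sequence `0 → V → E → C → 0` with `C ∈ C`,
`V ∈ C^⊥1` splits, and every object `X` admits short exact sequences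
`0 → V_X → U_X → X → 0` and `0 → X → V^X → U^X → 0` with `U_X, U^X ∈ C` and
`V_X, V^X ∈ C^⊥1`. -/
theorem stmt18 [EnoughProjectives B] [EnoughInjectives B]
    (C : B → Prop) (hCiso : IsoClosed C) (hCsum : SumClosed C)
    (hCsummand : SummandClosed C) (hrigid : Rigid C)
    (hcontra : StronglyContravariantlyFinite C) :
    SummandClosed (rightPerp C) ∧
    (∀ ⦃V E Cb : B⦄ (f : V ⟶ E) (g : E ⟶ Cb),
      C Cb → rightPerp C V → IsSES f g → Splits f g) ∧
    (∀ X : B, ∃ (Vb Ub : B) (f : Vb ⟶ Ub) (g : Ub ⟶ X),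
      rightPerp C Vb ∧ C Ub ∧ IsSES f g) ∧
    (∀ X : B, ∃ (Vb Ub : B) (f : X ⟶ Vb) (g : Vb ⟶ Ub),
      rightPerp C Vb ∧ C Ub ∧ IsSES f g) := by
  refine ⟨rightPerp_summandClosed C, fun V E Cb f g hC hV h => hV f g hC h, fun X => ?_,
    fun X => ?_⟩
  · obtain ⟨U, f, hU, hf, hfa⟩ := hcontra X
    exact ⟨kernel f, U, kernel.ι f, f, rightPerp_kernel hrigid hU hfa, hU, kernel.condition f,
      { exact := ShortComplex.exact_kernel f }⟩
  · let ι := Injective.ι X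
    obtain ⟨U, f, hU, hf, hfa⟩ := hcontra (cokernel ι)
    have hP := IsPullback.of_hasPullback (cokernel.π ι) f
    have hw : ι ≫ cokernel.π ι = 0 ≫ f := by rw [cokernel.condition, zero_comp]
    have w : pullback.lift ι 0 hw ≫ pullback.snd (cokernel.π ι) f = 0 :=
      pullback.lift_snd _ _ _
    have hm : Mono (pullback.lift ι 0 hw) := mono_of_mono_fac (pullback.lift_fst ι 0 hw)
    have hι := ShortComplex.exact_cokernel ι
    refine ⟨_, U, pullback.lift ι 0 hw, pullback.snd (cokernel.π ι) f,
      rightPerp_of_isPullback hrigid hU hfa hP, hU, w,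
      { exact := ShortComplex.exact_of_f_is_kernel _
          (KernelFork.IsLimit.ofι' _ w fun {A} k hk =>
            have hz : (k ≫ pullback.fst (cokernel.π ι) f) ≫ cokernel.π ι = 0 := by
              rw [Category.assoc, pullback.condition, reassoc_of% hk, zero_comp]
            ⟨hι.lift (k ≫ pullback.fst (cokernel.π ι) f) hz, by
              apply pullback.hom_ext
              · rw [Category.assoc, pullback.lift_fst]
                exact hι.lift_f (k ≫ pullback.fst (cokernel.π ι) f) hz
              · rw [Category.assoc, pullback.lift_snd, comp_zero, hk]⟩)
        mono_f := hm
        epi_g := inferInstanceAs (Epi (pullback.snd (cokernel.π ι) f)) }⟩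

end ClusterPaperAb
end
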